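/- Let P ⊆ ℝ³ be a simple convex polytope (the convex hull of finitely many points, full-dimensional, such that every vertex lies on exactly 3 edges) with exactly 8 vertices. Then some edge of P has dihedral angle at most π/2, the dihedral angle of the cube. -/

import Mathlib

/-!
The proof compares volumes of normal cones. The outer normal cone of `P` at a vertex `v` consists of
the linear functionals maximised over `P` at `v`, so the normal cones of the eight vertices cover
`ℝ³` (`exists_mem_normalCone3`). As `P` is simple, the tangent cone at each vertex is simplicial
(`simple_vertex_cone`), and the normal cone is spanned by the unit outer normals of the three facets
at that vertex (`exists_normals`).

Suppose every dihedral angle exceeds `π / 2`. Then any two facets sharing an edge have outer normals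
at an acute angle (`hausdorffMeasure_arc_le`), so each normal cone is spanned by three unit vectors
with pairwise positive inner products. Such a cone occupies strictly less than an eighth of the unit
ball (`eight_mul_measure_cone_lt`): it is a linear image of the orthant under a map of determinant
less than `1` in absolute value which does not decrease norms on the orthant. Eight such cones
cannot cover the ball.
-/

open MeasureTheory
open scoped ENNReal RealInnerProductSpace

/-- A face of a convex set: a closed convex extreme subset. -/
def IsFaceOf3 (P F : Set (EuclideanSpace ℝ (Fin 3))) : Prop :=
  IsExtreme ℝ P F ∧ Convex ℝ F ∧ IsClosed F

/-- An edge: a 1-dimensional face. -/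
def IsEdgeOf3 (P F : Set (EuclideanSpace ℝ (Fin 3))) : Prop :=
  IsFaceOf3 P F ∧ Module.finrank ℝ (affineSpan ℝ F).direction = 1

/-- A 3-polytope is simple if every vertex (extreme point) lies on exactly 3 edges. -/
def IsSimple3 (P : Set (EuclideanSpace ℝ (Fin 3))) : Prop :=
  ∀ v ∈ Set.extremePoints ℝ P, {F | IsEdgeOf3 P F ∧ v ∈ F}.ncard = 3

/-- The dihedral angle of `P` at the edge with endpoints `a`, `b`: the arc length of the
set of unit vectors orthogonal to `b - a` pointing from the edge midpoint into `P`. -/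
noncomputable def dihedralAngle3 (P : Set (EuclideanSpace ℝ (Fin 3)))
    (a b : EuclideanSpace ℝ (Fin 3)) : ℝ≥0∞ :=
  μH[1] {u : EuclideanSpace ℝ (Fin 3) |
    ‖u‖ = 1 ∧ ⟪u, b - a⟫ = 0 ∧ ∃ t > (0 : ℝ), midpoint ℝ a b + t • u ∈ P}

/-! ### Edges and tangent cone at a simple vertex -/

/-- Three-dimensional Euclidean space. -/
abbrev E3 := EuclideanSpace ℝ (Fin 3)

/-- Krein–Milman without the closure: a convex hull of finitely many points has finitely many
extreme points, so their convex hull is already closed. -/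
theorem convexHull_extremePoints_of_finite {S : Set E3} (hS : S.Finite) :
    convexHull ℝ ((convexHull ℝ S).extremePoints ℝ) = convexHull ℝ S := by
  have h := closure_convexHull_extremePoints (hS.isCompact_convexHull ℝ) (convex_convexHull ℝ S)
  have hf : ((convexHull ℝ S).extremePoints ℝ).Finite := hS.subset extremePoints_convexHull_subset
  rwa [(hf.isClosed_convexHull ℝ).closure_eq] at h

open scoped Pointwise in
/-- The vertex figure of the polytope at a vertex `v`. A functional `f` separates `v` from the other
vertices, and `Q` is the section of the tangent cone at `v` (translated to the origin) by the plane
`f = 1`: the polytope lies in the cone over `Q` with apex `v`, and each extreme point of `Q` is the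
direction of a ray from `v` meeting the polytope in a further point. -/
theorem exists_vertexFigure {V : Set E3} (hV : V.Finite) {v : E3}
    (hv : v ∈ (convexHull ℝ V).extremePoints ℝ) (hne : ∃ x ∈ convexHull ℝ V, x ≠ v) :
    ∃ (f : E3 →L[ℝ] ℝ) (Q : Set E3), Convex ℝ Q ∧ (Q.extremePoints ℝ).Finite ∧
      convexHull ℝ (Q.extremePoints ℝ) = Q ∧ (∀ q ∈ Q, f q = 1) ∧
      (∀ x ∈ convexHull ℝ V, ∃ α : ℝ, 0 ≤ α ∧ ∃ q ∈ Q, x - v = α • q) ∧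
      (∀ q ∈ Q.extremePoints ℝ, ∃ T > (0 : ℝ), v + T • q ∈ convexHull ℝ V) := by
  have hvn : v ∉ convexHull ℝ (V \ {v}) := by
    have h := ((convex_convexHull ℝ V).mem_extremePoints_iff_mem_sdiff_convexHull_sdiff).1 hv
    exact fun hh => h.2 (convexHull_mono (Set.sdiff_subset_sdiff_left (subset_convexHull ℝ V)) hh)
  have hVf : (V \ {v}).Finite := hV.subset Set.sdiff_subset
  obtain ⟨f, u, hu, hfu⟩ := geometric_hahn_banach_point_closed (convex_convexHull ℝ (V \ {v}))
    (hVf.isClosed_convexHull ℝ) hvn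
  have hpos : ∀ w ∈ V \ {v}, 0 < f (w - v) := by
    intro w hw
    have := hfu w (subset_convexHull ℝ _ hw)
    rw [map_sub]; linarith
  set g : E3 → E3 := fun w => (f (w - v))⁻¹ • (w - v) with hg
  have hFf : (g '' (V \ {v})).Finite := hVf.image g
  set Q := convexHull ℝ (g '' (V \ {v})) with hQ
  have hQne : Q.Nonempty := by
    obtain ⟨x, hx, hxv⟩ := hne
    by_contra hcon
    have h1 : V \ {v} = ∅ := by
      by_contra h2
      exact hcon ((convexHull_nonempty_iff.2 ((Set.nonempty_iff_ne_empty.2 h2).image g)))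
    have h2 : V ⊆ {v} := Set.sdiff_eq_empty.1 h1
    have := convexHull_min h2 (convex_singleton v) hx
    exact hxv this
  have hQc : Convex ℝ Q := convex_convexHull ℝ _
  refine ⟨f, Q, hQc, hFf.subset extremePoints_convexHull_subset,
    convexHull_extremePoints_of_finite hFf, ?_, ?_, ?_⟩
  · intro q hq
    have hc : Convex ℝ {x : E3 | f x = 1} := by
      intro x hx y hy a b _ _ hab
      simp only [Set.mem_ofPred_eq] at hx hy ⊢
      simp [hx, hy, hab]
    refine convexHull_min ?_ hc hq
    rintro _ ⟨w, hw, rfl⟩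
    simp only [hg, Set.mem_ofPred_eq, map_smul, smul_eq_mul]
    exact inv_mul_cancel₀ (hpos w hw).ne'
  · have hc : Convex ℝ {x : E3 | ∃ α : ℝ, 0 ≤ α ∧ ∃ q ∈ Q, x - v = α • q} := by
      rintro x ⟨α, hα, q, hq, hx⟩ y ⟨β, hβ, r, hr, hy⟩ a b ha hb hab
      have hmem : (a * α) • q + (b * β) • r ∈ (a * α + b * β) • Q := by
        rw [hQc.add_smul (mul_nonneg ha hα) (mul_nonneg hb hβ)]
        exact Set.add_mem_add (Set.smul_mem_smul_set hq) (Set.smul_mem_smul_set hr)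
      obtain ⟨s, hs, hs'⟩ := hmem
      refine ⟨a * α + b * β, by positivity, s, hs, ?_⟩
      have hs'' : (a * α + b * β) • s = (a * α) • q + (b * β) • r := hs'
      rw [hs'', mul_smul, mul_smul, ← hx, ← hy]
      calc a • x + b • y - v = a • x + b • y - (a + b) • v := by rw [hab, one_smul]
        _ = _ := by module
    intro x hx
    refine convexHull_min ?_ hc hx
    intro w hw
    by_cases hwv : w = v
    · obtain ⟨q, hq⟩ := hQne
      exact ⟨0, le_rfl, q, hq, by simp [hwv]⟩
    · have hw' : w ∈ V \ {v} := ⟨hw, hwv⟩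
      refine ⟨f (w - v), (hpos w hw').le, g w, subset_convexHull ℝ _ ⟨w, hw', rfl⟩, ?_⟩
      simp only [hg]
      rw [smul_smul, mul_inv_cancel₀ (hpos w hw').ne', one_smul]
  · intro q hq
    obtain ⟨w, hw, rfl⟩ := extremePoints_convexHull_subset hq
    refine ⟨f (w - v), hpos w hw, ?_⟩
    simp only [hg]
    rw [smul_smul, mul_inv_cancel₀ (hpos w hw).ne', one_smul, add_sub_cancel]
    exact subset_convexHull ℝ _ hw.1

/-- An extreme point `q` of the vertex figure spans an extreme ray of the tangent cone, so the part
of the polytope on this ray is an edge; compactness makes it a segment. -/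
theorem exists_edge_of_extremePoint {P Q : Set E3} (hP : IsCompact P) (hPc : Convex ℝ P) {v : E3}
    (hv : v ∈ P) {f : E3 →L[ℝ] ℝ} (hf : ∀ q ∈ Q, f q = 1)
    (hPQ : ∀ x ∈ P, ∃ α : ℝ, 0 ≤ α ∧ ∃ q ∈ Q, x - v = α • q) {q : E3}
    (hq : q ∈ Q.extremePoints ℝ) (hT : ∃ T > (0 : ℝ), v + T • q ∈ P) :
    ∃ T > (0 : ℝ), IsEdgeOf3 P (segment ℝ v (v + T • q)) := by
  obtain ⟨T₀, hT₀, hT₀P⟩ := hT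
  have hfq : f q = 1 := hf q hq.1
  have hq0 : q ≠ 0 := by rintro rfl; simp at hfq
  -- the other endpoint of the edge is the last point of the ray inside `P`
  have hcomp : IsCompact {t : ℝ | 0 ≤ t ∧ v + t • q ∈ P} := by
    have h1 : IsClosed {t : ℝ | 0 ≤ t ∧ v + t • q ∈ P} :=
      isClosed_Ici.inter (hP.isClosed.preimage (by fun_prop : Continuous fun t : ℝ => v + t • q))
    have h2 : {t : ℝ | 0 ≤ t ∧ v + t • q ∈ P} ⊆ (fun x => f x - f v) '' P := by
      rintro t ⟨_, ht⟩
      exact ⟨_, ht, by simp [hfq]⟩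
    exact (hP.image (by fun_prop : Continuous fun x => f x - f v)).of_isClosed_subset h1 h2
  obtain ⟨T, ⟨hT0, hTP⟩, hmax⟩ := hcomp.exists_isMaxOn ⟨T₀, hT₀.le, hT₀P⟩ continuousOn_id
  have hTpos : 0 < T := lt_of_lt_of_le hT₀ (hmax ⟨hT₀.le, hT₀P⟩)
  have hseg : ∀ x, x ∈ segment ℝ v (v + T • q) ↔ x ∈ P ∧ ∃ t : ℝ, 0 ≤ t ∧ x = v + t • q := by
    intro x
    constructor
    · intro hx
      refine ⟨hPc.segment_subset hv hTP hx, ?_⟩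
      rw [segment_eq_image'] at hx
      obtain ⟨θ, hθ, rfl⟩ := hx
      exact ⟨θ * T, mul_nonneg hθ.1 hT0, by simp [smul_smul]⟩
    · rintro ⟨hx, t, ht, rfl⟩
      have htT : t ≤ T := hmax ⟨ht, hx⟩
      rw [segment_eq_image']
      refine ⟨t / T, ⟨by positivity, (div_le_one hTpos).2 htT⟩, ?_⟩
      simp [smul_smul, div_mul_cancel₀ _ hTpos.ne']
  refine ⟨T, hTpos, ⟨⟨?_, ?_⟩, convex_segment _ _, ?_⟩, ?_⟩
  · exact fun x hx => ((hseg x).1 hx).1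
  · intro x hx y hy z hz hzxy
    obtain ⟨-, t, ht, rfl⟩ := (hseg z).1 hz
    rw [hseg]
    refine ⟨hx, ?_⟩
    obtain ⟨α, hα, r, hr, hxr⟩ := hPQ x hx
    obtain ⟨β, hβ, s, hs, hys⟩ := hPQ y hy
    obtain ⟨a, b, ha, hb, hab, hz'⟩ := hzxy
    -- `t • q` is a nonnegative combination of the points `r`, `s` of the vertex figure; comparing
    -- values of `f` makes `q` a convex combination of them unless `x` or `y` is the apex
    have hsum : t • q = (a * α) • r + (b * β) • s := by
      rw [mul_smul, mul_smul, ← hxr, ← hys]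
      calc t • q = (a • x + b • y) - (a + b) • v := by rw [hz', hab]; module
        _ = _ := by module
    have ht' : t = a * α + b * β := by
      have := congrArg f hsum
      simpa [hf r hr, hf s hs, hfq] using this
    have hx' : x = v + α • r := by rw [← hxr]; abel
    rcases hα.eq_or_lt with h0 | hα
    · exact ⟨0, le_rfl, by rw [hx', ← h0]; simp⟩
    rcases hβ.eq_or_lt with h0 | hβ
    · refine ⟨α, hα.le, ?_⟩
      rw [← h0] at hsum ht'
      simp only [mul_zero, zero_smul, add_zero] at hsum ht'
      rw [hx', smul_right_injective E3 (mul_pos ha hα).ne' (ht' ▸ hsum : (a * α) • q = _)]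
    · have htpos : 0 < t := by rw [ht']; positivity
      have hqo : q ∈ openSegment ℝ r s := by
        refine ⟨a * α / t, b * β / t, by positivity, by positivity, ?_, ?_⟩
        · rw [← add_div, ← ht', div_self htpos.ne']
        · have := congrArg (fun z => t⁻¹ • z) hsum
          simp only [smul_smul, inv_mul_cancel₀ htpos.ne', one_smul, smul_add] at this
          rw [this, div_eq_inv_mul, div_eq_inv_mul]
      exact ⟨α, hα.le, by rw [hx', hq.2 hr hs hqo]⟩
  · rw [← convexHull_pair]
    exact (Set.toFinite _).isClosed_convexHull ℝ
  · rw [← convexHull_pair, affineSpan_convexHull, direction_affineSpan, vectorSpan_pair_rev]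
    apply finrank_span_singleton
    simp [hTpos.ne', hq0]

/-- At a vertex `v` lying on exactly three edges, the tangent cone is simplicial: the edges issue in
the directions of a basis `m`, and the points of the polytope have nonnegative coordinates in `m`
relative to `v`. The vertex figure has at most three extreme points because each of them gives
an edge, and at least three because they span `ℝ³`. -/
theorem simple_vertex_cone {V : Set E3} (hV : V.Finite)
    (hint : (interior (convexHull ℝ V)).Nonempty) {v : E3}
    (hv : v ∈ (convexHull ℝ V).extremePoints ℝ)
    (h3 : {F | IsEdgeOf3 (convexHull ℝ V) F ∧ v ∈ F}.ncard = 3) :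
    ∃ (m : Module.Basis (Fin 3) ℝ E3) (T : Fin 3 → ℝ), (∀ i, 0 < T i) ∧
      (∀ i, IsEdgeOf3 (convexHull ℝ V) (segment ℝ v (v + T i • m i))) ∧
      ∀ x ∈ convexHull ℝ V, ∀ i, 0 ≤ m.repr (x - v) i := by
  set P := convexHull ℝ V with hPdef
  have hPc : Convex ℝ P := convex_convexHull ℝ V
  have hne : ∃ x ∈ P, x ≠ v := by
    by_contra hcon
    push Not at hcon
    have h1 : interior P ⊆ interior {v} := interior_mono hcon
    rw [interior_singleton] at h1
    exact hint.ne_empty (Set.subset_empty_iff.1 h1)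
  obtain ⟨f, Q, hQc, hfin, hQe, hf, hPQ, hTex⟩ := exists_vertexFigure hV hv hne
  have hedge : ∀ q ∈ Q.extremePoints ℝ, ∃ T > (0 : ℝ), IsEdgeOf3 P (segment ℝ v (v + T • q)) :=
    fun q hq => exists_edge_of_extremePoint (hV.isCompact_convexHull ℝ) hPc hv.1 hf hPQ hq
      (hTex q hq)
  choose! T hTpos hTe using hedge
  have hspanQ : Q ⊆ Submodule.span ℝ (Q.extremePoints ℝ) := by
    rw [← hQe]
    exact convexHull_min (by rw [hQe]; exact Submodule.subset_span) (Submodule.convex _)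
  -- the span contains a translate of the polytope, which has nonempty interior
  have hspan : Submodule.span ℝ (Q.extremePoints ℝ) = ⊤ := by
    apply Submodule.eq_top_of_nonempty_interior'
    obtain ⟨x, hx⟩ := hint
    refine ⟨x - v, ?_⟩
    have hopen : IsOpen ((fun y : E3 => y + v) ⁻¹' interior P) :=
      isOpen_interior.preimage (by fun_prop)
    refine interior_maximal ?_ hopen (by simpa using hx)
    intro y hy
    obtain ⟨α, -, q, hq, h⟩ := hPQ _ (interior_subset hy)
    have : y = α • q := by simpa using h
    rw [this]
    exact Submodule.smul_mem _ _ (hspanQ hq)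
  have hcard : (Q.extremePoints ℝ).ncard ≤ 3 := by
    refine le_of_le_of_eq ?_ h3
    refine Set.ncard_le_ncard_of_injOn (fun q => segment ℝ v (v + T q • q)) ?_ ?_ 
      (Set.finite_of_ncard_ne_zero (by rw [h3]; norm_num))
    · exact fun q hq => ⟨hTe q hq, left_mem_segment ℝ _ _⟩
    · -- the direction of the segment, normalised by `f = 1`, recovers `q`
      intro q hq r hr h
      have h1 : v + T q • q ∈ segment ℝ v (v + T r • r) := by
        have h' : segment ℝ v (v + T q • q) = segment ℝ v (v + T r • r) := h
        rw [← h']; exact right_mem_segment ℝ _ _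
      rw [segment_eq_image'] at h1
      obtain ⟨θ, -, hθ⟩ := h1
      have h2 : T q • q = (θ * T r) • r := by
        simpa [smul_smul] using hθ.symm
      have h3 : T q = θ * T r := by
        simpa [hf q hq.1, hf r hr.1] using congrArg f h2
      rw [← h3] at h2
      exact smul_right_injective E3 (hTpos q hq).ne' h2
  have : Fintype (Q.extremePoints ℝ) := hfin.fintype
  have hcard3 : Fintype.card (Q.extremePoints ℝ) = 3 := by
    apply le_antisymm
    · rwa [← Nat.card_eq_fintype_card]
    · have := finrank_span_le_card (R := ℝ) (Q.extremePoints ℝ)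
      rw [hspan, finrank_top, finrank_euclideanSpace_fin, Set.toFinset_card] at this
      exact this
  let e : Fin 3 ≃ Q.extremePoints ℝ := (Fintype.equivFinOfCardEq hcard3).symm
  let q : Fin 3 → E3 := fun i => (e i : E3)
  have hrange : Set.range q = Q.extremePoints ℝ := by
    ext x
    constructor
    · rintro ⟨i, rfl⟩; exact (e i).2
    · intro hx; exact ⟨e.symm ⟨x, hx⟩, by simp [q]⟩
  have hq : ∀ i, q i ∈ Q.extremePoints ℝ := fun i => (e i).2
  have hli : LinearIndependent ℝ q :=
    linearIndependent_of_top_le_span_of_card_eq_finrank (by rw [hrange, hspan]) (by simp)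
  let m := Module.Basis.mk hli (by rw [hrange, hspan])
  have hm : ∀ i, m i = q i := fun i => by simp [m]
  refine ⟨m, fun i => T (q i), fun i => hTpos _ (hq i), fun i => ?_, ?_⟩
  · rw [hm]; exact hTe _ (hq i)
  · intro x hx i
    obtain ⟨α, hα, r, hr, h⟩ := hPQ x hx
    have hr' : 0 ≤ m.coord i r := by
      have hc : Convex ℝ {z : E3 | 0 ≤ m.coord i z} := convex_halfSpace_ge (m.coord i).isLinear 0
      rw [← hQe] at hr
      refine convexHull_min ?_ hc hr
      rw [← hrange]
      rintro _ ⟨j, rfl⟩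
      rw [← hm, Set.mem_ofPred_eq, Module.Basis.coord_apply, Module.Basis.repr_self,
        Finsupp.single_apply]
      split_ifs <;> norm_num
    rw [h]
    simpa using mul_nonneg hα hr'

/-! ### Length of the arc between two facets -/

/-- If `n₂` and the unit vector `n₁`, both orthogonal to `m`, make a non-acute angle and are not parallel, then
the unit vectors of the plane `m⊥` on the nonpositive side of both lie on an arc of length at most
`π / 2`. For outer normals of the two facets at an edge with direction `m`, this bounds the dihedral
angle. -/
theorem hausdorffMeasure_arc_le {m n₁ n₂ : EuclideanSpace ℝ (Fin 3)} (hm : m ≠ 0) (h₁ : ‖n₁‖ = 1)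
    (hm₁ : ⟪n₁, m⟫ = 0) (hm₂ : ⟪n₂, m⟫ = 0) (hne : ∀ c : ℝ, n₂ ≠ c • n₁)
    (h₁₂ : ⟪n₁, n₂⟫ ≤ 0) :
    μH[1] {u : EuclideanSpace ℝ (Fin 3) | ‖u‖ = 1 ∧ ⟪u, m⟫ = 0 ∧ ⟪n₁, u⟫ ≤ 0 ∧ ⟪n₂, u⟫ ≤ 0} ≤
      ENNReal.ofReal (Real.pi / 2) := by
  set p : ℝ := ⟪n₁, n₂⟫ with hp
  set w := p • n₁ - n₂ with hw
  have hw0 : w ≠ 0 := fun h => hne p (sub_eq_zero.1 h).symm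
  have hwn : 0 < ‖w‖ := norm_pos_iff.2 hw0
  have h₁₁ : ⟪n₁, n₁⟫ = (1 : ℝ) := by rw [real_inner_self_eq_norm_sq, h₁]; norm_num
  have hw₁ : ⟪n₁, w⟫ = 0 := by rw [hw, inner_sub_right, inner_smul_right, h₁₁, ← hp]; ring
  have hwm : ⟪w, m⟫ = 0 := by rw [hw, inner_sub_left, real_inner_smul_left, hm₁, hm₂]; ring
  -- `-n₁` and the direction of `w` (Gram–Schmidt) form an orthonormal basis of `m⊥` in which the
  -- region lies in the first quadrant
  let e : Fin 3 → EuclideanSpace ℝ (Fin 3) := ![-n₁, ‖w‖⁻¹ • w, ‖m‖⁻¹ • m]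
  have he : Orthonormal ℝ e := by
    constructor
    · intro i
      fin_cases i <;> simp [e, h₁, norm_smul, hwn.ne', hm]
    · intro i j hij
      have hw₁' : ⟪w, n₁⟫ = 0 := by rw [real_inner_comm]; exact hw₁
      have hwm' : ⟪m, w⟫ = 0 := by rw [real_inner_comm]; exact hwm
      have hm₁' : ⟪m, n₁⟫ = 0 := by rw [real_inner_comm]; exact hm₁
      fin_cases i <;> fin_cases j <;>
        simp [e, inner_smul_left, inner_smul_right, hw₁, hwm, hm₁, hw₁', hwm', hm₁'] at hij ⊢
  let b := basisOfOrthonormalOfCardEqFinrank he (by simp)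
  have hb : ⇑b = e := coe_basisOfOrthonormalOfCardEqFinrank he (by simp)
  let B := b.toOrthonormalBasis (by rw [hb]; exact he)
  have hB : ∀ i, B i = e i := fun i => by simp [B, hb]
  let g : ℝ → EuclideanSpace ℝ (Fin 3) := fun θ => Real.cos θ • B 0 + Real.sin θ • B 1
  have hnorm : ∀ a c : ℝ, ‖a • B 0 + c • B 1‖ ^ 2 = a ^ 2 + c ^ 2 := by
    intro a c
    have h0 : ‖B 0‖ = 1 := B.orthonormal.1 0
    have h1 : ‖B 1‖ = 1 := B.orthonormal.1 1
    have h01 : ⟪B 0, B 1⟫ = 0 := B.orthonormal.2 (by norm_num)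
    rw [norm_add_sq_real, norm_smul, norm_smul, inner_smul_left, inner_smul_right, h0, h1, h01]
    simp
  have hg : LipschitzWith 1 g := by
    refine LipschitzWith.of_dist_le_mul fun x y => ?_
    rw [NNReal.coe_one, one_mul, dist_eq_norm, Real.dist_eq]
    apply le_of_sq_le_sq _ (abs_nonneg _)
    have : g x - g y = (Real.cos x - Real.cos y) • B 0 + (Real.sin x - Real.sin y) • B 1 := by
      simp only [g]; module
    rw [this, hnorm, sq_abs]
    have h1 := Real.one_sub_sq_div_two_le_cos (x := x - y)
    rw [Real.cos_sub] at h1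
    nlinarith [Real.sin_sq_add_cos_sq x, Real.sin_sq_add_cos_sq y]
  have hsub : {u : EuclideanSpace ℝ (Fin 3) |
      ‖u‖ = 1 ∧ ⟪u, m⟫ = 0 ∧ ⟪n₁, u⟫ ≤ 0 ∧ ⟪n₂, u⟫ ≤ 0} ⊆ g '' Set.Icc 0 (Real.pi / 2) := by
    rintro u ⟨hu, hum, hu₁, hu₂⟩
    have hsum := B.sum_repr' u
    rw [Fin.sum_univ_three] at hsum
    have h2 : ⟪B 2, u⟫ = 0 := by
      rw [hB]; simp only [e, Matrix.cons_val]
      rw [real_inner_smul_left, real_inner_comm, hum, mul_zero]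
    have ha : 0 ≤ ⟪B 0, u⟫ := by
      rw [hB]; simp only [e, Matrix.cons_val]
      rw [inner_neg_left]; linarith
    have hc : 0 ≤ ⟪B 1, u⟫ := by
      rw [hB]; simp only [e, Matrix.cons_val]
      rw [real_inner_smul_left]
      refine mul_nonneg (inv_nonneg.2 hwn.le) ?_
      rw [hw, inner_sub_left, real_inner_smul_left]
      nlinarith
    rw [h2, zero_smul, add_zero] at hsum
    have hsq := hnorm ⟪B 0, u⟫ ⟪B 1, u⟫
    rw [hsum, hu] at hsq
    refine ⟨Real.arcsin ⟪B 1, u⟫, ⟨Real.arcsin_nonneg.2 hc, Real.arcsin_le_pi_div_two _⟩, ?_⟩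
    simp only [g]
    rw [Real.cos_arcsin, Real.sin_arcsin (by linarith) (by nlinarith),
      show 1 - ⟪B 1, u⟫ ^ 2 = ⟪B 0, u⟫ ^ 2 by linarith, Real.sqrt_sq ha, hsum]
  calc _ ≤ μH[1] (g '' Set.Icc 0 (Real.pi / 2)) := measure_mono hsub
    _ ≤ _ := (hg.lipschitzOnWith.hausdorffMeasure_image_le zero_le_one)
    _ = _ := by rw [hausdorffMeasure_real]; simp

/-! ### Volume of an acute simplicial cone -/

/-- A half-space `x i ≥ 0` carries at most half of the volume of a set invariant under a linear
isometry negating the `i`-th coordinate, the plane `x i = 0` being null. -/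
theorem two_mul_measure_inter_le {S : Set (EuclideanSpace ℝ (Fin 3))} (i : Fin 3)
    (r : EuclideanSpace ℝ (Fin 3) ≃ₗᵢ[ℝ] EuclideanSpace ℝ (Fin 3)) (hr : ∀ x, (r x) i = - x i)
    (hS : r ⁻¹' S = S) :
    2 * volume (S ∩ {x | 0 ≤ x i}) ≤ volume S := by
  have hmeas : MeasurableSet {x : EuclideanSpace ℝ (Fin 3) | 0 ≤ x i} :=
    measurableSet_le measurable_const (by fun_prop)
  have hpre : r ⁻¹' (S \ {x | 0 ≤ x i}) = S ∩ {x | 0 < x i} := by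
    rw [Set.preimage_sdiff, hS]
    ext x
    simp [hr]
  have hvol : volume (S ∩ {x | 0 < x i}) = volume (S \ {x | 0 ≤ x i}) := by
    rw [← hpre]
    exact r.measurePreserving.measure_preimage_emb r.toHomeomorph.measurableEmbedding _
  have hnull : volume {x : EuclideanSpace ℝ (Fin 3) | x i = 0} = 0 := by
    let L : Submodule ℝ (EuclideanSpace ℝ (Fin 3)) := LinearMap.ker
      (EuclideanSpace.proj i : EuclideanSpace ℝ (Fin 3) →L[ℝ] ℝ).toLinearMap
    have hL : L ≠ ⊤ := by
      intro h
      have : EuclideanSpace.single i (1 : ℝ) ∈ L := h ▸ Submodule.mem_top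
      simp [L] at this
    have h := Measure.addHaar_submodule volume L hL
    have hset : {x : EuclideanSpace ℝ (Fin 3) | x i = 0} = L := by ext x; simp [L]
    rwa [hset]
  have hle : volume (S ∩ {x | 0 ≤ x i}) ≤ volume (S ∩ {x | 0 < x i}) := by
    calc volume (S ∩ {x | 0 ≤ x i}) ≤ volume ((S ∩ {x | 0 < x i}) ∪ {x | x i = 0}) := by
          apply measure_mono
          rintro x ⟨hx, hx0⟩
          rcases (show 0 ≤ x i from hx0).eq_or_lt with h | h
          · exact Or.inr h.symm
          · exact Or.inl ⟨hx, h⟩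
      _ ≤ _ := measure_union_le _ _
      _ = _ := by rw [hnull, add_zero]
  rw [two_mul]
  calc _ ≤ volume (S ∩ {x | 0 ≤ x i}) + volume (S \ {x | 0 ≤ x i}) := by
        exact add_le_add le_rfl (hvol ▸ hle)
    _ = _ := measure_inter_add_sdiff _ hmeas

/-- The linear isometry of `ℝ³` flipping the sign of the `i`-th coordinate. -/
noncomputable def flip3 (i : Fin 3) : EuclideanSpace ℝ (Fin 3) ≃ₗᵢ[ℝ] EuclideanSpace ℝ (Fin 3) :=
  LinearIsometryEquiv.piLpCongrRight 2
    fun j => if j = i then LinearIsometryEquiv.neg ℝ else LinearIsometryEquiv.refl ℝ ℝ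

theorem flip3_apply (i j : Fin 3) (x : EuclideanSpace ℝ (Fin 3)) :
    flip3 i x j = if j = i then - x j else x j := by
  simp only [flip3, LinearIsometryEquiv.piLpCongrRight_apply]
  split_ifs <;> simp

theorem eight_mul_measure_orthant_le :
    8 * volume (Metric.ball (0 : EuclideanSpace ℝ (Fin 3)) 1 ∩ {x | ∀ i, 0 ≤ x i}) ≤
      volume (Metric.ball (0 : EuclideanSpace ℝ (Fin 3)) 1) := by
  set B := Metric.ball (0 : EuclideanSpace ℝ (Fin 3)) 1
  have hB : ∀ i, flip3 i ⁻¹' B = B := by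
    intro i; ext x; simp [B]
  have h0 := two_mul_measure_inter_le (S := B) 0 (flip3 0) (by simp [flip3_apply]) (hB 0)
  have h1 := two_mul_measure_inter_le (S := B ∩ {x | 0 ≤ x 0}) 1 (flip3 1)
    (by simp [flip3_apply]) (by rw [Set.preimage_inter, hB]; simp [flip3_apply])
  have h2 := two_mul_measure_inter_le (S := B ∩ {x | 0 ≤ x 0} ∩ {x | 0 ≤ x 1}) 2 (flip3 2)
    (by simp [flip3_apply])
    (by rw [Set.preimage_inter, Set.preimage_inter, hB]; simp [flip3_apply])
  have heq : B ∩ {x | ∀ i, 0 ≤ x i} = B ∩ {x | 0 ≤ x 0} ∩ {x | 0 ≤ x 1} ∩ {x | 0 ≤ x 2} := by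
    ext x; simp [Fin.forall_fin_succ, and_assoc]
  rw [heq]
  calc _ = 2 * (2 * (2 * volume (B ∩ {x | 0 ≤ x 0} ∩ {x | 0 ≤ x 1} ∩ {x | 0 ≤ x 2}))) := by
        rw [← mul_assoc, ← mul_assoc]; norm_num
    _ ≤ 2 * (2 * volume (B ∩ {x | 0 ≤ x 0} ∩ {x | 0 ≤ x 1})) := by gcongr
    _ ≤ 2 * volume (B ∩ {x | 0 ≤ x 0}) := by gcongr
    _ ≤ _ := h0

/-- A cone spanned by three unit vectors at pairwise acute angles fills less than an eighth of the
unit ball. In the coordinates given by the `n i`, the part of the cone in the ball sits inside the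
part of the orthant in the ball, since `‖∑ c i • n i‖² ≥ ∑ (c i)²`; and the change of coordinates
shrinks volumes strictly, since its squared determinant is the Gram determinant, which is `< 1`. -/
theorem eight_mul_measure_cone_lt {n : Fin 3 → EuclideanSpace ℝ (Fin 3)} (hn : ∀ i, ‖n i‖ = 1)
    (hpos : ∀ i j, i ≠ j → 0 < ⟪n i, n j⟫) :
    8 * volume (Metric.ball (0 : EuclideanSpace ℝ (Fin 3)) 1 ∩
        {y | ∃ c : Fin 3 → ℝ, (∀ i, 0 ≤ c i) ∧ y = ∑ i, c i • n i}) <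
      volume (Metric.ball (0 : EuclideanSpace ℝ (Fin 3)) 1) := by
  set B := Metric.ball (0 : EuclideanSpace ℝ (Fin 3)) 1
  let M : Matrix (Fin 3) (Fin 3) ℝ := Matrix.of fun k i => n i k
  let A : EuclideanSpace ℝ (Fin 3) →ₗ[ℝ] EuclideanSpace ℝ (Fin 3) := Matrix.toEuclideanLin M
  have hA : ∀ x, A x = ∑ i, x i • n i := by
    intro x
    ext k
    simp [A, M, Matrix.toLpLin_apply, Matrix.mulVec, dotProduct, mul_comm]
  have hgram : M.transpose * M = Matrix.of fun i j => ⟪n i, n j⟫ := by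
    ext i j
    simp [M, Matrix.mul_apply, PiLp.inner_apply, mul_comm]
  have hdet : |LinearMap.det A| < 1 := by
    have h1 : LinearMap.det A = M.det := by
      simp [A, Matrix.toLpLin_eq_toLin]
    have hsq : M.det ^ 2 < 1 := by
      have : M.det ^ 2 = (M.transpose * M).det := by rw [Matrix.det_mul, Matrix.det_transpose, sq]
      rw [this, hgram, Matrix.det_fin_three]
      have hii : ∀ i, ⟪n i, n i⟫ = (1 : ℝ) := fun i => by
        rw [real_inner_self_eq_norm_sq, hn]; norm_num
      have hle : ⟪n 1, n 2⟫ ≤ (1 : ℝ) := by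
        have := real_inner_le_norm (n 1) (n 2)
        rwa [hn, hn, mul_one] at this
      have h01 := hpos 0 1 (by decide)
      have h02 := hpos 0 2 (by decide)
      have h12 := hpos 1 2 (by decide)
      simp only [Matrix.of_apply, hii, real_inner_comm (n 0) (n 1), real_inner_comm (n 0) (n 2),
        real_inner_comm (n 1) (n 2)]
      nlinarith [mul_pos h01 h02, mul_nonneg (mul_pos h01 h02).le (sub_nonneg.2 hle),
        sq_nonneg (⟪n 0, n 1⟫ - ⟪n 0, n 2⟫), mul_pos h12 h12]
    rw [h1]
    exact (sq_lt_one_iff_abs_lt_one _).1 hsq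
  have hsub : B ∩ {y | ∃ c : Fin 3 → ℝ, (∀ i, 0 ≤ c i) ∧ y = ∑ i, c i • n i} ⊆
      A '' (B ∩ {x | ∀ i, 0 ≤ x i}) := by
    rintro y ⟨hy, c, hc, rfl⟩
    refine ⟨WithLp.toLp 2 c, ⟨?_, hc⟩, by rw [hA]⟩
    simp only [B, mem_ball_zero_iff] at hy ⊢
    refine lt_of_le_of_lt (le_of_sq_le_sq ?_ (norm_nonneg _)) hy
    rw [EuclideanSpace.norm_sq_eq, ← real_inner_self_eq_norm_sq, sum_inner]
    simp only [inner_sum, Real.norm_eq_abs, sq_abs]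
    refine Finset.sum_le_sum fun i _ => ?_
    refine le_trans ?_ (Finset.single_le_sum (fun j _ => ?_) (Finset.mem_univ i))
    · rw [real_inner_smul_left, real_inner_smul_right, real_inner_self_eq_norm_sq, hn]
      apply le_of_eq; ring
    · rw [real_inner_smul_left, real_inner_smul_right]
      by_cases hij : i = j
      · subst hij
        exact mul_nonneg (hc _) (mul_nonneg (hc _) real_inner_self_nonneg)
      · exact mul_nonneg (hc _) (mul_nonneg (hc _) (hpos i j hij).le)
  have hB0 : volume B ≠ 0 := (Metric.measure_ball_pos volume _ one_pos).ne'
  have hBt : volume B ≠ ⊤ := measure_ball_lt_top.ne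
  calc 8 * volume (B ∩ {y | ∃ c : Fin 3 → ℝ, (∀ i, 0 ≤ c i) ∧ y = ∑ i, c i • n i})
      ≤ 8 * volume (A '' (B ∩ {x | ∀ i, 0 ≤ x i})) := by gcongr
    _ = ENNReal.ofReal |LinearMap.det A| * (8 * volume (B ∩ {x | ∀ i, 0 ≤ x i})) := by
        rw [Measure.addHaar_image_linearMap]; ring
    _ ≤ ENNReal.ofReal |LinearMap.det A| * volume B := by
        gcongr; exact eight_mul_measure_orthant_le
    _ < 1 * volume B := by
        rw [ENNReal.mul_lt_mul_iff_left hB0 hBt]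
        rwa [ENNReal.ofReal_lt_one]
    _ = _ := one_mul _

/-! ### Normal cones -/

/-- The unit outer normals `n i` of the facets of the simplicial cone spanned by a basis `m`, namely
the negated and normalised dual basis: `n i` is the normal of the facet opposite to `m i`. They span
the polar cone. -/
theorem exists_normals (m : Module.Basis (Fin 3) ℝ E3) :
    ∃ n : Fin 3 → E3, (∀ i, ‖n i‖ = 1) ∧ (∀ i j, i ≠ j → ⟪n i, m j⟫ = 0) ∧
      (∀ x, (∀ i, 0 ≤ m.repr x i) → ∀ i, ⟪n i, x⟫ ≤ 0) ∧
      (∀ y, (∀ i, ⟪y, m i⟫ ≤ 0) → ∃ c : Fin 3 → ℝ, (∀ i, 0 ≤ c i) ∧ y = ∑ i, c i • n i) ∧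
      ∀ i j, i ≠ j → ∀ c : ℝ, n j ≠ c • n i := by
  let d : Fin 3 → E3 := fun i =>
    (InnerProductSpace.toDual ℝ E3).symm (LinearMap.toContinuousLinearMap (m.coord i))
  have hd : ∀ i x, ⟪d i, x⟫ = m.repr x i := by
    intro i x
    simp [d]
  have hdm : ∀ i j, ⟪d i, m j⟫ = if i = j then 1 else (0 : ℝ) := by
    intro i j
    rw [hd, Module.Basis.repr_self, Finsupp.single_apply]
    simp [eq_comm]
  have hdn : ∀ i, 0 < ‖d i‖ := by
    intro i
    rw [norm_pos_iff]
    intro h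
    have := hdm i i
    simp [h] at this
  refine ⟨fun i => (-‖d i‖⁻¹) • d i, ?_, ?_, ?_, ?_, ?_⟩
  · intro i
    simp [norm_smul, (hdn i).ne']
  · intro i j hij
    simp [real_inner_smul_left, hdm, hij]
  · intro x hx i
    rw [real_inner_smul_left, hd]
    have := mul_nonneg (inv_nonneg.2 (hdn i).le) (hx i)
    linarith
  · intro y hy
    refine ⟨fun i => -(‖d i‖ * ⟪y, m i⟫), fun i => ?_, ?_⟩
    · have := mul_nonneg (hdn i).le (neg_nonneg.2 (hy i))
      linarith
    · have h1 : ∀ i, (-(‖d i‖ * ⟪y, m i⟫)) • ((-‖d i‖⁻¹) • d i) = (⟪y, m i⟫ : ℝ) • d i := by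
        intro i
        rw [smul_smul]
        congr 1
        field_simp [(hdn i).ne']
      simp only [h1]
      refine InnerProductSpace.ext_inner_right_basis m fun j => ?_
      simp [sum_inner, real_inner_smul_left, hdm]
  · intro i j hij c h
    have := congrArg (fun z => (⟪z, m j⟫ : ℝ)) h
    simp [real_inner_smul_left, hdm, hij, (hdn j).ne'] at this

/-- The (outer) normal cone of `P` at `v`. -/
def normalCone3 (P : Set E3) (v : E3) : Set E3 := {y | ∀ x ∈ P, ⟪y, x - v⟫ ≤ 0}

/-- The normal cones at the points of `V` cover the space: every linear functional attains its
maximum over the convex hull of `V` at a point of `V`. -/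
theorem exists_mem_normalCone3 {V : Set E3} (hV : V.Finite) (hne : V.Nonempty) (y : E3) :
    ∃ v ∈ V, y ∈ normalCone3 (convexHull ℝ V) v := by
  obtain ⟨v, hv, hmax⟩ := Set.exists_max_image V (fun x => (⟪y, x⟫ : ℝ)) hV hne
  refine ⟨v, hv, fun x hx => ?_⟩
  have hc : Convex ℝ {x : E3 | (⟪y, x⟫ : ℝ) ≤ ⟪y, v⟫} :=
    convex_halfSpace_le (innerₗ E3 y).isLinear _
  have := convexHull_min hmax hc hx
  rw [inner_sub_right]
  exact sub_nonpos.2 this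

/-- If all edges have dihedral angle greater than `π / 2`, the normals of the three facets at a
simple vertex are at pairwise acute angles, so the normal cone there fills less than an eighth of
the unit ball. -/
theorem eight_mul_measure_normalCone3_lt {V : Set E3} (hV : V.Finite)
    (hint : (interior (convexHull ℝ V)).Nonempty) {v : E3}
    (hv : v ∈ (convexHull ℝ V).extremePoints ℝ)
    (h3 : {F | IsEdgeOf3 (convexHull ℝ V) F ∧ v ∈ F}.ncard = 3)
    (hangle : ∀ a b, a ≠ b → IsEdgeOf3 (convexHull ℝ V) (segment ℝ a b) →
      ENNReal.ofReal (Real.pi / 2) < dihedralAngle3 (convexHull ℝ V) a b) :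
    8 * volume (Metric.ball (0 : E3) 1 ∩ normalCone3 (convexHull ℝ V) v) <
      volume (Metric.ball (0 : E3) 1) := by
  obtain ⟨m, T, hT, hedge, hP⟩ := simple_vertex_cone hV hint hv h3
  obtain ⟨n, hn, hnm, hnP, hncone, hindep⟩ := exists_normals m
  have hpos : ∀ i j, i ≠ j → 0 < ⟪n i, n j⟫ := by
    intro i j hij
    by_contra! hcon
    -- the facets with normals `n i` and `n j` meet in the edge with direction `m k`
    obtain ⟨k, hik, hjk⟩ : ∃ k : Fin 3, i ≠ k ∧ j ≠ k := by
      clear hcon; decide +revert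
    have hmk : m k ≠ 0 := m.ne_zero k
    have hlt := hangle v (v + T k • m k) (by simp [(hT k).ne', hmk]) (hedge k)
    refine absurd hlt (not_lt.2 ?_)
    refine le_trans (measure_mono ?_)
      (hausdorffMeasure_arc_le hmk (hn i) (hnm i k hik) (hnm j k hjk) (hindep i j hij) hcon)
    rintro u ⟨hu, hum, t, ht, htP⟩
    have hside : ∀ l, l ≠ k → ⟪n l, u⟫ ≤ 0 := by
      intro l hl
      have h := hnP _ (hP _ htP) l
      have hmid : midpoint ℝ v (v + T k • m k) + t • u - v = (T k / 2) • m k + t • u := by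
        rw [midpoint_eq_smul_add, invOf_eq_inv]; module
      rw [hmid, inner_add_right, real_inner_smul_right, real_inner_smul_right, hnm l k hl,
        mul_zero, zero_add] at h
      exact nonpos_of_mul_nonpos_right h ht
    refine ⟨hu, ?_, hside i hik, hside j hjk⟩
    rw [add_sub_cancel_left, real_inner_smul_right] at hum
    exact (mul_eq_zero.1 hum).resolve_left (hT k).ne'
  refine lt_of_le_of_lt ?_ (eight_mul_measure_cone_lt hn hpos)
  gcongr
  intro y hy
  refine hncone y fun i => ?_
  have h := hy _ ((hedge i).1.1.subset (right_mem_segment ℝ _ _))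
  rw [add_sub_cancel_left, real_inner_smul_right] at h
  exact nonpos_of_mul_nonpos_right h (hT i)

/-! ### Simple polytopes with eight vertices -/

/-- A simple convex polytope in `ℝ³` with exactly 8 vertices has an edge with dihedral
angle at most `π/2`, the dihedral angle of the cube. -/
theorem exists_edge_dihedralAngle_le_cube
    (P : Set (EuclideanSpace ℝ (Fin 3)))
    (hpoly : ∃ S : Set (EuclideanSpace ℝ (Fin 3)), S.Finite ∧ P = convexHull ℝ S)
    (hfull : (interior P).Nonempty)
    (hsimple : IsSimple3 P)
    (hvert : (Set.extremePoints ℝ P).ncard = 8) :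
    ∃ F a b, IsEdgeOf3 P F ∧ a ≠ b ∧ F = segment ℝ a b ∧
      dihedralAngle3 P a b ≤ ENNReal.ofReal (Real.pi / 2) := by
  obtain ⟨S, hS, rfl⟩ := hpoly
  by_contra! hcon
  have hlt : ∀ v ∈ (convexHull ℝ S).extremePoints ℝ,
      8 * volume (Metric.ball (0 : E3) 1 ∩ normalCone3 (convexHull ℝ S) v) <
        volume (Metric.ball (0 : E3) 1) := fun v hv =>
    eight_mul_measure_normalCone3_lt hS hfull hv (hsimple v hv)
      fun a b hab he => hcon _ a b he hab rfl
  have hfin : ((convexHull ℝ S).extremePoints ℝ).Finite :=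
    hS.subset extremePoints_convexHull_subset
  have hcard : hfin.toFinset.card = 8 := by rw [← Set.ncard_eq_toFinset_card _ hfin, hvert]
  have hne : hfin.toFinset.Nonempty := Finset.card_pos.1 (by omega)
  have hcover : Metric.ball (0 : E3) 1 ⊆ ⋃ v ∈ hfin.toFinset,
      Metric.ball (0 : E3) 1 ∩ normalCone3 (convexHull ℝ S) v := by
    intro y hy
    obtain ⟨v, hv, hvy⟩ := exists_mem_normalCone3 hfin (by simpa using hne) y
    rw [convexHull_extremePoints_of_finite hS] at hvy
    exact Set.mem_biUnion (hfin.mem_toFinset.2 hv) ⟨hy, hvy⟩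
  have h1 : 8 * volume (Metric.ball (0 : E3) 1) < 8 * volume (Metric.ball (0 : E3) 1) :=
    calc 8 * volume (Metric.ball (0 : E3) 1)
        ≤ 8 * ∑ v ∈ hfin.toFinset,
            volume (Metric.ball (0 : E3) 1 ∩ normalCone3 (convexHull ℝ S) v) := by
          gcongr
          exact (measure_mono hcover).trans (measure_biUnion_finset_le _ _)
      _ = ∑ v ∈ hfin.toFinset,
            8 * volume (Metric.ball (0 : E3) 1 ∩ normalCone3 (convexHull ℝ S) v) :=
          Finset.mul_sum _ _ _
      _ < ∑ v ∈ hfin.toFinset, volume (Metric.ball (0 : E3) 1) :=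
          ENNReal.sum_lt_sum_of_nonempty hne fun v hv => hlt v (hfin.mem_toFinset.1 hv)
      _ = 8 * volume (Metric.ball (0 : E3) 1) := by rw [Finset.sum_const, hcard]; simp
  exact lt_irrefl _ h1
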